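/- For every ε > 0 there exists δ > 0 (which may be taken to be 2^{−O(1/ε)}) such that for every bipartite graph G with parts X and Y satisfying |X| = n and |Y| = 2n: if im(G) < (1 − ε)·n, then log₂ mis(G) < (1 − δ)·n. -/

import Mathlib

/-- A set of vertices is independent in `G` if it spans no edge. -/
def IsIndepSet {V : Type*} (G : SimpleGraph V) (s : Set V) : Prop :=
  ∀ ⦃x⦄, x ∈ s → ∀ ⦃y⦄, y ∈ s → ¬ G.Adj x y

/-- A maximal independent set. -/
def IsMaxIndepSet {V : Type*} (G : SimpleGraph V) (s : Set V) : Prop :=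
  IsIndepSet G s ∧ ∀ t, IsIndepSet G t → s ⊆ t → s = t

/-- `mis G` is the number of maximal independent sets of `G`. -/
noncomputable def mis {V : Type*} (G : SimpleGraph V) : ℕ :=
  Nat.card {s : Set V // IsMaxIndepSet G s}

/-- `S` induces a triangle matching: within `S`, every vertex has exactly two
neighbours, and these two neighbours are adjacent; so `G[S]` is a vertex-disjoint
union of triangles. -/
def IsInducedTriangleMatching {V : Type*} (G : SimpleGraph V) (S : Finset V) : Prop :=
  ∀ x ∈ S, ∃ y ∈ S, ∃ z ∈ S, G.Adj x y ∧ G.Adj x z ∧ G.Adj y z ∧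
    ∀ w ∈ S, G.Adj x w → w = y ∨ w = z

/-- `itm G`: the largest number of triangles in an induced triangle matching. -/
noncomputable def itm {V : Type*} (G : SimpleGraph V) : ℕ :=
  sSup {k | ∃ S : Finset V, S.card = 3 * k ∧ IsInducedTriangleMatching G S}

/-- `S` induces a matching: within `S`, every vertex has exactly one neighbour. -/
def IsInducedMatching {V : Type*} (G : SimpleGraph V) (S : Finset V) : Prop :=
  ∀ x ∈ S, ∃ y ∈ S, G.Adj x y ∧ ∀ z ∈ S, G.Adj x z → z = y

/-- `im G`: the largest number of edges in an induced matching. -/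
noncomputable def im {V : Type*} (G : SimpleGraph V) : ℕ :=
  sSup {k | ∃ S : Finset V, S.card = 2 * k ∧ IsInducedMatching G S}

/-- The neighbourhood of a set of vertices. -/
def nbhd {V : Type*} (G : SimpleGraph V) (S : Set V) : Set V :=
  {y | ∃ x ∈ S, G.Adj x y}

/-- A set `J` is irredundant if no member's neighbourhood is covered by the
neighbourhoods of the other members. -/
def Irredundant {V : Type*} (G : SimpleGraph V) (J : Set V) : Prop :=
  ∀ x ∈ J, ¬ (G.neighborSet x ⊆ nbhd G (J \ {x}))

/-- `irr G X`: the number of irredundant subsets of `X`. -/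
noncomputable def irr {V : Type*} (G : SimpleGraph V) (X : Set V) : ℕ :=
  Nat.card {J : Set V // J ⊆ X ∧ Irredundant G J}


set_option linter.unusedSectionVars false

section aux
open Finset
variable {α β : Type*} [Fintype α] [DecidableEq α] [DecidableEq β]

/-- irredundant subsets of `X` w.r.t. hyperedges `A y`, `y ∈ Y`. -/
noncomputable def Irr (A : β → Finset α) (Y : Finset β) (X : Finset α) : Finset (Finset α) :=
  open Classical in X.powerset.filter (fun J => ∀ x ∈ J, ∃ y ∈ Y, A y ∩ J = {x})

theorem mem_Irr {A : β → Finset α} {Y : Finset β} {X J : Finset α} :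
    J ∈ Irr A Y X ↔ J ⊆ X ∧ ∀ x ∈ J, ∃ y ∈ Y, A y ∩ J = {x} := by
  simp [Irr]

theorem inter_single {A J J' : Finset α} {x : α} (h : A ∩ J = {x}) (hs : J' ⊆ J) (hx : x ∈ J') :
    A ∩ J' = {x} := by
  have : x ∈ A ∩ J := by rw [h]; simp
  ext z
  have hz : z ∈ A ∩ J ↔ z ∈ ({x} : Finset α) := by rw [h]
  simp only [mem_inter, mem_singleton] at *
  constructor
  · rintro ⟨h1, h2⟩; exact hz.1 ⟨h1, hs h2⟩
  · rintro rfl; exact ⟨this.1, hx⟩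

/-- splitting count -/
theorem card_split (F G H : Finset (Finset α)) (U : Finset α)
    (hG : ∀ J ∈ F, J ∩ U ∈ G) (hH : ∀ J ∈ F, J \ U ∈ H) : #F ≤ #G * #H := by
  rw [← card_product]
  apply card_le_card_of_injOn (fun J => (J ∩ U, J \ U))
  · intro J hJ
    exact mem_product.2 ⟨hG J hJ, hH J hJ⟩
  · intro J _ K _ h
    simp only [Prod.mk.injEq] at h
    rw [← sdiff_union_inter J U, ← sdiff_union_inter K U, h.1, h.2]

theorem Irr_delete (A : β → Finset α) (Y : Finset β) (X R : Finset α) :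
    #(Irr A Y X) ≤ 2 ^ #R * #(Irr A Y (X \ R)) := by
  rw [← card_powerset]
  apply card_split _ _ _ R
  · intro J _; simp
  · intro J hJ
    rw [mem_Irr] at *
    refine ⟨sdiff_subset_sdiff hJ.1 (le_refl _), fun x hx => ?_⟩
    obtain ⟨y, hy, h⟩ := hJ.2 x (mem_sdiff.1 hx).1
    exact ⟨y, hy, inter_single h sdiff_subset hx⟩

theorem Irr_mono_X {A : β → Finset α} {Y : Finset β} {X X' : Finset α} (h : X' ⊆ X) :
    Irr A Y X' ⊆ Irr A Y X := by
  intro J hJ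
  rw [mem_Irr] at *
  exact ⟨hJ.1.trans h, hJ.2⟩

theorem product_bound {ι : Type*} [DecidableEq ι] (p : ℝ) (hp : p ≤ 1) (I : Finset ι)
    (S : ι → Finset α) (Good : ι → Finset (Finset α)) :
    ∀ (X : Finset α) (F : Finset (Finset α)), (∀ J ∈ F, J ⊆ X) → (∀ i ∈ I, S i ⊆ X) →
    (∀ i ∈ I, ∀ j ∈ I, i ≠ j → Disjoint (S i) (S j)) →
    (∀ i ∈ I, (#(Good i) : ℝ) ≤ (1 - p) * 2 ^ #(S i)) →
    (∀ i ∈ I, ∀ J ∈ F, J ∩ S i ∈ Good i) →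
    (#F : ℝ) ≤ 2 ^ #X * (1 - p) ^ #I := by
  induction I using Finset.induction_on with
  | empty =>
    intro X F hF _ _ _ _
    have : #F ≤ #(X.powerset) := card_le_card (fun J hJ => mem_powerset.2 (hF J hJ))
    rw [card_powerset] at this
    simpa using (by exact_mod_cast this : (#F : ℝ) ≤ 2 ^ #X)
  | insert i I hi ih =>
    intro X F hF hS hd hG hFG
    have h1 : #F ≤ #(Good i) * #(F.image (· \ S i)) := by
      apply card_split _ _ _ (S i)
      · intro J hJ; exact hFG i (mem_insert_self _ _) J hJ
      · intro J hJ; exact mem_image_of_mem _ hJ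
    have hdi : ∀ j ∈ I, Disjoint (S j) (S i) := fun j hj =>
      hd j (mem_insert_of_mem hj) i (mem_insert_self _ _) (fun h => hi (h ▸ hj))
    have h2 := ih (X \ S i) (F.image (· \ S i))
      (by
        intro J hJ
        obtain ⟨K, hK, rfl⟩ := mem_image.1 hJ
        exact sdiff_subset_sdiff (hF K hK) (le_refl _))
      (fun j hj => subset_sdiff.2 ⟨hS j (mem_insert_of_mem hj), hdi j hj⟩)
      (fun j hj l hl => hd j (mem_insert_of_mem hj) l (mem_insert_of_mem hl))
      (fun j hj => hG j (mem_insert_of_mem hj))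
      (by
        intro j hj J hJ
        obtain ⟨K, hK, rfl⟩ := mem_image.1 hJ
        have : (K \ S i) ∩ S j = K ∩ S j := by
          have := disjoint_left.1 (hdi j hj)
          ext z; simp only [mem_inter, mem_sdiff]; tauto
        simp only [this]
        exact hFG j (mem_insert_of_mem hj) K hK)
    have hSX := hS i (mem_insert_self _ _)
    have h3 : #X = #(S i) + #(X \ S i) := by
      rw [card_sdiff_of_subset hSX]; have := card_le_card hSX; omega
    have hGi := hG i (mem_insert_self _ _)
    rw [card_insert_of_notMem hi, h3]
    calc (#F : ℝ) ≤ #(Good i) * #(F.image (· \ S i)) := by exact_mod_cast h1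
      _ ≤ ((1 - p) * 2 ^ #(S i)) * (2 ^ #(X \ S i) * (1 - p) ^ #I) := by
        have : 0 ≤ 1 - p := by linarith
        gcongr
      _ = _ := by rw [pow_add, pow_succ]; ring

theorem harris (s : Finset β) (B : β → Finset α) :
    (2 : ℝ) ^ Fintype.card α * ∏ y ∈ s, (1 - (1 / 2 : ℝ) ^ #(B y)) ≤
      #{K : Finset α | ∀ y ∈ s, (B y ∩ K).Nonempty} := by
  induction s using Finset.induction_on with
  | empty => simp
  | insert b s hb ih =>
    rw [prod_insert hb]
    have up1 : IsUpperSet ((({K : Finset α | (B b ∩ K).Nonempty} : Finset (Finset α))) : Set (Finset α)) := by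
      intro K L hKL hK
      simp only [coe_filter, mem_univ, true_and, Set.mem_ofPred_eq] at *
      exact hK.mono (inter_subset_inter_left hKL)
    have up2 : IsUpperSet ((({K : Finset α | ∀ y ∈ s, (B y ∩ K).Nonempty} : Finset (Finset α))) : Set (Finset α)) := by
      intro K L hKL hK
      simp only [coe_filter, mem_univ, true_and, Set.mem_ofPred_eq] at *
      exact fun y hy => (hK y hy).mono (inter_subset_inter_left hKL)
    have h := up1.le_card_inter_finset up2
    have hone : (#{K : Finset α | (B b ∩ K).Nonempty} : ℝ) =
        2 ^ Fintype.card α * (1 - (1 / 2 : ℝ) ^ #(B b)) := by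
      have e1 := card_filter_add_card_filter_not (s := (univ : Finset (Finset α)))
        (fun K : Finset α => (B b ∩ K).Nonempty)
      have e2 : ({K : Finset α | ¬ (B b ∩ K).Nonempty} : Finset (Finset α)) = (B b)ᶜ.powerset := by
        ext K
        simp only [mem_filter, mem_univ, true_and, mem_powerset, not_nonempty_iff_eq_empty]
        rw [← disjoint_iff_inter_eq_empty, disjoint_comm, subset_compl_iff_disjoint_right]
      rw [e2, card_powerset, card_compl, card_univ, Fintype.card_finset] at e1
      have e3 : (2 : ℝ) ^ (Fintype.card α - #(B b)) = 2 ^ Fintype.card α * (1 / 2 : ℝ) ^ #(B b) := by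
        rw [pow_sub₀ _ (by norm_num) (card_le_univ _)]; simp
      have e4 : (#{K : Finset α | (B b ∩ K).Nonempty} : ℝ) + 2 ^ (Fintype.card α - #(B b))
        = 2 ^ Fintype.card α := by exact_mod_cast e1
      rw [e3] at e4
      linarith
    have e5 : ({K : Finset α | ∀ y ∈ insert b s, (B y ∩ K).Nonempty} : Finset (Finset α)) =
      ({K : Finset α | (B b ∩ K).Nonempty} : Finset (Finset α)) ∩
      ({K : Finset α | ∀ y ∈ s, (B y ∩ K).Nonempty} : Finset (Finset α)) := by
      ext K; simp
    rw [e5]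
    have h' : (#{K : Finset α | (B b ∩ K).Nonempty} : ℝ) * #{K : Finset α | ∀ y ∈ s, (B y ∩ K).Nonempty}
      ≤ 2 ^ Fintype.card α * #(({K : Finset α | (B b ∩ K).Nonempty} : Finset (Finset α)) ∩
      ({K : Finset α | ∀ y ∈ s, (B y ∩ K).Nonempty} : Finset (Finset α))) := by exact_mod_cast h
    rw [hone] at h'
    have hpos : (0 : ℝ) < 2 ^ Fintype.card α := by positivity
    have h6 : 0 ≤ 1 - (1 / 2 : ℝ) ^ #(B b) := by
      have : (1 / 2 : ℝ) ^ #(B b) ≤ 1 := pow_le_one₀ (by norm_num) (by norm_num)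
      linarith
    refine le_trans ?_ (le_of_mul_le_mul_left (by rw [← mul_assoc] at *; exact h') hpos)
    calc _ = (1 - (1 / 2 : ℝ) ^ #(B b)) * (2 ^ Fintype.card α * ∏ y ∈ s, (1 - (1 / 2 : ℝ) ^ #(B y))) := by ring
      _ ≤ _ := mul_le_mul_of_nonneg_left ih h6

theorem harris' (s : Finset β) (B : β → Finset α) (Z : Finset α) (hB : ∀ y ∈ s, B y ⊆ Z) :
    (2 : ℝ) ^ #Z * ∏ y ∈ s, (1 - (1 / 2 : ℝ) ^ #(B y)) ≤
      #{K ∈ Z.powerset | ∀ y ∈ s, (B y ∩ K).Nonempty} := by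
  have h1 := harris s B
  have h2 : #{K : Finset α | ∀ y ∈ s, (B y ∩ K).Nonempty} ≤
    #{K ∈ Z.powerset | ∀ y ∈ s, (B y ∩ K).Nonempty} * #(Zᶜ.powerset) := by
    apply card_split _ _ _ Z
    · intro J hJ
      simp only [mem_filter, mem_univ, true_and, mem_powerset] at *
      refine ⟨inter_subset_right, fun y hy => ?_⟩
      obtain ⟨z, hz⟩ := hJ y hy
      rw [mem_inter] at hz
      exact ⟨z, by simp [hz.1, hz.2, hB y hy hz.1]⟩
    · intro J hJ
      rw [mem_powerset]; intro z; simp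
  rw [card_powerset] at h2
  have h3 : Fintype.card α = #Z + #Zᶜ := (card_add_card_compl Z).symm
  have h2' : (#{K : Finset α | ∀ y ∈ s, (B y ∩ K).Nonempty} : ℝ) ≤
    #{K ∈ Z.powerset | ∀ y ∈ s, (B y ∩ K).Nonempty} * 2 ^ #Zᶜ := by exact_mod_cast h2
  rw [h3, pow_add] at h1
  have hpos : (0 : ℝ) < 2 ^ #Zᶜ := by positivity
  refine le_of_mul_le_mul_right ?_ hpos
  calc _ = _ := by ring
    _ ≤ _ := h1
    _ ≤ _ := h2'

theorem one_sub_ge (t : ℝ) (h1 : t ≤ 1 / 2) (h0 : 0 ≤ t): Real.exp (-(2 * t)) ≤ 1 - t := by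
  have := Real.one_sub_inv_le_log_of_pos (x := 1 - t) (by linarith)
  rw [← Real.le_log_iff_exp_le (by linarith)]
  refine le_trans ?_ this
  have h : (1 - t)⁻¹ ≤ 1 + 2 * t := by
    rw [inv_le_iff_one_le_mul₀ (by linarith)]; nlinarith
  linarith

/-- bound on allowed traces around a vertex without private neighbour -/
theorem trace_bound (A : β → Finset α) (Y : Finset β) (S : Finset α) (x : α) (hx : x ∈ S) (W : ℝ)
    (h2 : ∀ y ∈ Y, x ∈ A y → 2 ≤ #(A y ∩ S))
    (hW : ∑ y ∈ Y with x ∈ A y, 2 * (1 / 2 : ℝ) ^ #(A y ∩ S) ≤ W) :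
    (#{J ∈ S.powerset | x ∈ J → ∃ y ∈ Y, A y ∩ J = {x}} : ℝ) ≤
      (1 - 1 / 2 * Real.exp (-(2 * W))) * 2 ^ #S := by
  have hc := card_filter_add_card_filter_not (s := S.powerset)
    (fun J => x ∈ J → ∃ y ∈ Y, A y ∩ J = {x})
  rw [card_powerset] at hc
  have hc' : (#{J ∈ S.powerset | x ∈ J → ∃ y ∈ Y, A y ∩ J = {x}} : ℝ) +
    #{J ∈ S.powerset | ¬ (x ∈ J → ∃ y ∈ Y, A y ∩ J = {x})} = 2 ^ #S := by exact_mod_cast hc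
  have hh := harris' (Y.filter (fun y => x ∈ A y)) (fun y => (A y ∩ S).erase x) (S.erase x)
    (by intro y _; exact erase_subset_erase _ inter_subset_right)
  have hinj : #{K ∈ (S.erase x).powerset | ∀ y ∈ Y.filter (fun y => x ∈ A y),
      (((A y ∩ S).erase x) ∩ K).Nonempty} ≤
      #{J ∈ S.powerset | ¬ (x ∈ J → ∃ y ∈ Y, A y ∩ J = {x})} := by
    apply card_le_card_of_injOn (fun K => insert x K)
    · intro K hK
      simp only [coe_filter, mem_filter, mem_powerset, Set.mem_ofPred_eq] at *
      refine ⟨insert_subset hx (hK.1.trans (erase_subset _ _)), ?_⟩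
      push Not
      refine ⟨mem_insert_self _ _, fun y hy he => ?_⟩
      have hxy : x ∈ A y := by
        have : x ∈ A y ∩ insert x K := by rw [he]; simp
        exact (mem_inter.1 this).1
      obtain ⟨z, hz⟩ := hK.2 y ⟨hy, hxy⟩
      simp only [mem_inter, mem_erase] at hz
      have : z ∈ A y ∩ insert x K := by simp [hz.1.2.1, hz.2]
      rw [he, mem_singleton] at this
      exact hz.1.1 this
    · intro K hK L hL h
      simp only [coe_filter, mem_powerset, Set.mem_ofPred_eq] at hK hL h
      have hxK : x ∉ K := fun h => by simpa using hK.1 h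
      have hxL : x ∉ L := fun h => by simpa using hL.1 h
      rw [← erase_insert hxK, ← erase_insert hxL, h]
  have hprod : Real.exp (-(2 * W)) ≤ ∏ y ∈ Y.filter (fun y => x ∈ A y),
      (1 - (1 / 2 : ℝ) ^ #((A y ∩ S).erase x)) := by
    calc Real.exp (-(2 * W)) ≤ Real.exp (∑ y ∈ Y with x ∈ A y, -(2 * (2 * (1 / 2 : ℝ) ^ #(A y ∩ S)))) := by
          apply Real.exp_le_exp.2
          rw [sum_neg_distrib, ← mul_sum]; linarith
      _ = ∏ y ∈ Y with x ∈ A y, Real.exp (-(2 * (2 * (1 / 2 : ℝ) ^ #(A y ∩ S)))) := Real.exp_sum _ _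
      _ ≤ _ := by
          apply prod_le_prod
          · intros; positivity
          · intro y hy
            rw [mem_filter] at hy
            have h2' := h2 y hy.1 hy.2
            have e : #((A y ∩ S).erase x) + 1 = #(A y ∩ S) :=
              card_erase_add_one (mem_inter.2 ⟨hy.2, hx⟩)
            have e2 : 2 * (1 / 2 : ℝ) ^ #(A y ∩ S) = (1 / 2 : ℝ) ^ #((A y ∩ S).erase x) := by
              rw [← e, pow_succ]; ring
            rw [e2]
            apply one_sub_ge
            · calc _ ≤ (1 / 2 : ℝ) ^ 1 := pow_le_pow_of_le_one (by norm_num) (by norm_num) (by omega)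
                _ = _ := by norm_num
            · positivity
  have hS : (2 : ℝ) ^ #S = 2 ^ #(S.erase x) * 2 := by
    rw [← card_erase_add_one hx, pow_succ]
  have hinj' := (Nat.cast_le (α := ℝ)).2 hinj
  have : (2 : ℝ) ^ #(S.erase x) * Real.exp (-(2 * W)) ≤ (2 : ℝ) ^ #(S.erase x) * ∏ y ∈ Y.filter (fun y => x ∈ A y),
      (1 - (1 / 2 : ℝ) ^ #((A y ∩ S).erase x)) := by gcongr
  rw [hS] at hc' ⊢
  linarith


theorem double_count (A : β → Finset α) (Y : Finset β) (X : Finset α) (g : β → ℝ) :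
    ∑ x ∈ X, ∑ y ∈ Y with x ∈ A y, g y = ∑ y ∈ Y, (#(A y ∩ X) : ℝ) * g y := by
  simp_rw [sum_filter]
  rw [sum_comm]
  apply sum_congr rfl
  intro y _
  rw [← sum_filter, sum_const, nsmul_eq_mul]
  congr 3
  ext z; simp [and_comm]

theorem exists_disjoint_family (B : Finset α) (S : α → Finset α) (L : ℕ)
    (hself : ∀ x ∈ B, x ∈ S x)
    (hsymm : ∀ x ∈ B, ∀ z ∈ S x, x ∈ S z)
    (hL : ∀ x ∈ B, #(S x) ≤ L) (hL' : ∀ x ∈ B, ∀ z ∈ S x, #(S z) ≤ L) :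
    ∃ I ⊆ B, (∀ i ∈ I, ∀ j ∈ I, i ≠ j → Disjoint (S i) (S j)) ∧ #B ≤ #I * L ^ 2 := by
  classical
  let P := B.powerset.filter (fun I => ∀ i ∈ I, ∀ j ∈ I, i ≠ j → Disjoint (S i) (S j))
  obtain ⟨I, hI, hmax⟩ := exists_max_image P card ⟨∅, by simp [P]⟩
  simp only [P, mem_filter, mem_powerset] at hI hmax
  refine ⟨I, hI.1, hI.2, ?_⟩
  have hsub : B ⊆ I.biUnion (fun i => (S i).biUnion S) := by
    intro x hx
    by_contra hcon
    simp only [mem_biUnion, not_exists, not_and] at hcon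
    have hd : ∀ i ∈ I, Disjoint (S i) (S x) := by
      intro i hi
      rw [disjoint_left]
      intro z hz hzx
      exact hcon i hi z hz (hsymm x hx z hzx)
    have hxI : x ∉ I := fun h => hcon x h x (hself x hx) (hself x hx)
    have := hmax (insert x I) ⟨insert_subset hx hI.1, by
      intro i hi j hj hij
      rw [mem_insert] at hi hj
      rcases hi with rfl | hi <;> rcases hj with rfl | hj
      · exact absurd rfl hij
      · exact (hd j hj).symm
      · exact hd i hi
      · exact hI.2 i hi j hj hij⟩
    rw [card_insert_of_notMem hxI] at this
    omega
  refine (card_le_card hsub).trans (card_biUnion_le_card_mul _ _ _ ?_)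
  intro i hi
  rw [pow_two]
  refine (card_biUnion_le_card_mul _ _ L (fun z hz => hL' i (hI.1 hi) z hz)).trans ?_
  exact Nat.mul_le_mul_right _ (hL i (hI.1 hi))

theorem d_le (d : ℕ) : (d : ℝ) * (2 * (1 / 2) ^ d) ≤ 1 := by
  have h : d ≤ 2 ^ (d - 1) := by
    rcases d with _ | d
    · simp
    · simpa using Nat.lt_two_pow_self (n := d)
  rcases d with _ | d
  · simp
  · have h' : ((d + 1 : ℕ) : ℝ) ≤ 2 ^ d := by exact_mod_cast h
    rw [pow_succ, div_pow, one_pow]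
    have : (0 : ℝ) < 2 ^ d := by positivity
    field_simp
    linarith

theorem bounded_degree (A : β → Finset α) (Y : Finset β) (X : Finset α) (k D n : ℕ)
    (hk : 1 ≤ k) (hD : 1 ≤ D) (hdeg : ∀ y ∈ Y, #(A y ∩ X) ≤ D) (hY : #Y ≤ 2 * n)
    (hX : 4 * k * n ≤ 4 * k * #X + n) (him : ∀ J ∈ Irr A Y X, k * #J + n ≤ k * n) :
    (#(Irr A Y X) : ℝ) ≤ 2 ^ #X *
      Real.exp (-(Real.exp (-(16 * k)) / (648 * k ^ 3 * D ^ 4) * n)) := by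
  classical
  let R := X.filter (fun z => 8 * D * k < #(Y.filter (fun y => z ∈ A y)))
  have hR : 4 * k * #R ≤ n := by
    have h1 := double_count A Y X (fun _ => 1)
    simp only [sum_const, nsmul_eq_mul, mul_one] at h1
    have h1' : ∑ x ∈ X, #(Y.filter (fun y => x ∈ A y)) = ∑ y ∈ Y, #(A y ∩ X) := by exact_mod_cast h1
    have h2 : ∑ y ∈ Y, #(A y ∩ X) ≤ #Y * D := by
      simpa using sum_le_card_nsmul Y _ D hdeg
    have h3 : #R * (8 * D * k) ≤ ∑ x ∈ R, #(Y.filter (fun y => x ∈ A y)) := by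
      simpa using card_nsmul_le_sum R (fun x => #(Y.filter (fun y => x ∈ A y))) (8 * D * k)
        (fun x hx => (mem_filter.1 hx).2.le)
    have h4 : ∑ x ∈ R, #(Y.filter (fun y => x ∈ A y)) ≤ ∑ x ∈ X, #(Y.filter (fun y => x ∈ A y)) :=
      sum_le_sum_of_subset (filter_subset _ _)
    have h5 : #R * (8 * D * k) ≤ 2 * n * D := by
      calc _ ≤ #Y * D := by omega
        _ ≤ _ := Nat.mul_le_mul_right _ hY
    have h6 : 2 * D * (4 * k * #R) ≤ 2 * D * n := by linarith
    exact Nat.le_of_mul_le_mul_left h6 (by omega)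
  have hRX : R ⊆ X := filter_subset _ _
  obtain ⟨X2, hX2⟩ : ∃ X2, X2 = X \ R := ⟨_, rfl⟩
  have hX2X : X2 ⊆ X := hX2 ▸ sdiff_subset
  have hcX : #X = #R + #X2 := by
    rw [hX2, card_sdiff_of_subset hRX]; have := card_le_card hRX; omega
  have hdegY : ∀ y ∈ Y, #(A y ∩ X2) ≤ D := fun y hy =>
    (card_le_card (inter_subset_inter_left hX2X)).trans (hdeg y hy)
  have hdegX : ∀ z ∈ X2, #(Y.filter (fun y => z ∈ A y)) ≤ 8 * D * k := by
    intro z hz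
    rw [hX2, mem_sdiff, mem_filter] at hz
    by_contra h
    exact hz.2 ⟨hz.1, by omega⟩
  let Pr := X2.filter (fun x => ∃ y ∈ Y, A y ∩ X2 = {x})
  have hPrX : Pr ⊆ X2 := filter_subset _ _
  have hPr : k * #Pr + n ≤ k * n := by
    apply him
    apply Irr_mono_X hX2X
    rw [mem_Irr]
    refine ⟨hPrX, fun x hx => ?_⟩
    obtain ⟨y, hy, h⟩ := (mem_filter.1 hx).2
    exact ⟨y, hy, inter_single h hPrX hx⟩
  let w : α → ℝ := fun x => ∑ y ∈ Y with x ∈ A y, 2 * (1 / 2 : ℝ) ^ #(A y ∩ X2)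
  have hw0 : ∀ x, 0 ≤ w x := fun x => sum_nonneg (fun y _ => by positivity)
  have hwsum : ∑ x ∈ X2, w x ≤ 2 * n := by
    simp only [w]
    rw [double_count A Y X2]
    calc _ ≤ ∑ y ∈ Y, (1 : ℝ) := sum_le_sum (fun y _ => d_le _)
      _ = #Y := by simp
      _ ≤ 2 * n := by exact_mod_cast hY
  let H := X2.filter (fun x => 8 * (k : ℝ) < w x)
  have hH : 4 * k * #H ≤ n := by
    have h1 : #H * (8 * (k : ℝ)) ≤ ∑ x ∈ H, w x := by
      simpa using card_nsmul_le_sum H w (8 * k) (fun x hx => (mem_filter.1 hx).2.le)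
    have h2 : ∑ x ∈ H, w x ≤ ∑ x ∈ X2, w x :=
      sum_le_sum_of_subset_of_nonneg (filter_subset _ _) (fun x _ _ => hw0 x)
    have h3 : 4 * (k : ℝ) * #H ≤ n := by linarith
    exact_mod_cast h3
  let B := (X2 \ Pr) \ H
  have hB : n ≤ 4 * k * #B := by
    have h1 : #X2 ≤ #Pr + #H + #B := by
      have e1 := le_card_sdiff Pr X2
      have e2 : #(X2 \ Pr) - #H ≤ #B := le_card_sdiff H (X2 \ Pr)
      omega
    have h2 : 4 * k * #X2 ≤ 4 * k * (#Pr + #H + #B) := Nat.mul_le_mul_left _ h1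
    rw [hcX] at hX
    nlinarith
  have hBX : B ⊆ X2 := sdiff_subset.trans sdiff_subset
  let S : α → Finset α := fun x => X2.filter (fun z => z = x ∨ ∃ y ∈ Y, x ∈ A y ∧ z ∈ A y)
  have hScard : ∀ x ∈ X2, #(S x) ≤ 9 * k * D ^ 2 := by
    intro x hx
    have hsub : S x ⊆ insert x ((Y.filter (fun y => x ∈ A y)).biUnion (fun y => A y ∩ X2)) := by
      intro z hz
      simp only [S, mem_filter] at hz
      rw [mem_insert]
      rcases hz with ⟨hz, h | ⟨y, hy, h1, h2⟩⟩
      · exact Or.inl h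
      · right
        rw [mem_biUnion]
        exact ⟨y, mem_filter.2 ⟨hy, h1⟩, mem_inter.2 ⟨h2, hz⟩⟩
    have h1 := (card_le_card hsub).trans (card_insert_le _ _)
    have h2 := card_biUnion_le_card_mul (Y.filter (fun y => x ∈ A y)) (fun y => A y ∩ X2) D
      (fun y hy => hdegY y (mem_filter.1 hy).1)
    have h3 := Nat.mul_le_mul_right D (hdegX x hx)
    have h4 : 1 ≤ k * D ^ 2 := Nat.one_le_iff_ne_zero.2 (by positivity)
    calc #(S x) ≤ 8 * D * k * D + 1 := by omega
      _ ≤ 9 * k * D ^ 2 := by nlinarith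
  have hSX : ∀ x, S x ⊆ X2 := fun x => filter_subset _ _
  obtain ⟨I, hIB, hId, hIc⟩ := exists_disjoint_family B S (9 * k * D ^ 2)
    (fun x hx => mem_filter.2 ⟨hBX hx, Or.inl rfl⟩)
    (by
      intro x hx z hz
      rw [mem_filter] at hz
      refine mem_filter.2 ⟨hBX hx, ?_⟩
      rcases hz.2 with h | ⟨y, hy, h1, h2⟩
      · exact Or.inl h.symm
      · exact Or.inr ⟨y, hy, h2, h1⟩)
    (fun x hx => hScard x (hBX hx))
    (fun x hx z hz => hScard z (hSX x hz))
  have hAS : ∀ x ∈ X2, ∀ y ∈ Y, x ∈ A y → A y ∩ S x = A y ∩ X2 := by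
    intro x hx y hy hxy
    ext z
    simp only [S, mem_inter, mem_filter]
    constructor
    · rintro ⟨a, b, _⟩; exact ⟨a, b⟩
    · rintro ⟨a, b⟩; exact ⟨a, b, Or.inr ⟨y, hy, hxy, a⟩⟩
  set p : ℝ := 1 / 2 * Real.exp (-(2 * (8 * k))) with hp
  have hp1 : p ≤ 1 := by
    have : Real.exp (-(2 * (8 * (k : ℝ)))) ≤ 1 := Real.exp_le_one_iff.2 (by
      have : (0 : ℝ) ≤ k := by positivity
      linarith)
    rw [hp]; linarith
  have hmain := product_bound p hp1 I S
    (fun x => {J ∈ (S x).powerset | x ∈ J → ∃ y ∈ Y, A y ∩ J = {x}}) X2 (Irr A Y X2)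
    (fun J hJ => (mem_Irr.1 hJ).1) (fun i _ => hSX i) hId
    (by
      intro x hx
      have hxB := hIB hx
      have hxX := hBX hxB
      apply trace_bound A Y (S x) x (mem_filter.2 ⟨hxX, Or.inl rfl⟩)
      · intro y hy hxy
        rw [hAS x hxX y hy hxy]
        by_contra hlt
        have hpr : x ∉ Pr := (mem_sdiff.1 (mem_sdiff.1 hxB).1).2
        apply hpr
        refine mem_filter.2 ⟨hxX, y, hy, ?_⟩
        symm
        apply eq_of_subset_of_card_le
        · rw [singleton_subset_iff]; exact mem_inter.2 ⟨hxy, hxX⟩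
        · simp; omega
      · have hwx : w x ≤ 8 * k := by
          by_contra hlt
          exact (mem_sdiff.1 hxB).2 (mem_filter.2 ⟨hxX, not_le.1 hlt⟩)
        refine le_trans (le_of_eq ?_) hwx
        apply sum_congr rfl
        intro y hy
        rw [mem_filter] at hy
        rw [hAS x hxX y hy.1 hy.2])
    (by
      intro x hx J hJ
      rw [mem_filter, mem_powerset]
      refine ⟨inter_subset_right, fun hxJ => ?_⟩
      obtain ⟨y, hy, h⟩ := (mem_Irr.1 hJ).2 x (mem_inter.1 hxJ).1
      exact ⟨y, hy, inter_single h inter_subset_left hxJ⟩)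
  have hdel := Irr_delete A Y X R
  rw [← hX2] at hdel
  have hdel' : (#(Irr A Y X) : ℝ) ≤ 2 ^ #R * #(Irr A Y X2) := by exact_mod_cast hdel
  have hpow : (1 - p) ^ #I ≤ Real.exp (-(Real.exp (-(16 * k)) / (648 * k ^ 3 * D ^ 4) * n)) := by
    have h1 : (1 - p) ^ #I ≤ (Real.exp (-p)) ^ #I := by
      apply pow_le_pow_left₀ (by linarith)
      have := Real.add_one_le_exp (-p); linarith
    refine h1.trans ?_
    rw [← Real.exp_nat_mul]
    apply Real.exp_le_exp.2
    have h2 : (n : ℝ) ≤ 4 * k * (#I * (9 * k * D ^ 2) ^ 2) := by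
      exact_mod_cast hB.trans (Nat.mul_le_mul_left _ hIc)
    have hkp : (0 : ℝ) < k := by exact_mod_cast hk
    have hDp : (0 : ℝ) < D := by exact_mod_cast hD
    have e : 2 * (8 * (k : ℝ)) = 16 * k := by ring
    rw [hp, e]
    have hE := Real.exp_pos (-(16 * (k : ℝ)))
    set E := Real.exp (-(16 * (k : ℝ)))
    have : E / (648 * k ^ 3 * D ^ 4) * n ≤ #I * (1 / 2 * E) := by
      rw [div_mul_eq_mul_div, div_le_iff₀ (by positivity)]
      have := mul_le_mul_of_nonneg_left h2 hE.le
      nlinarith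
    linarith
  rw [hcX, pow_add]
  calc (#(Irr A Y X) : ℝ) ≤ 2 ^ #R * #(Irr A Y X2) := hdel'
    _ ≤ 2 ^ #R * (2 ^ #X2 * (1 - p) ^ #I) := by gcongr
    _ ≤ 2 ^ #R * (2 ^ #X2 * Real.exp (-(Real.exp (-(16 * k)) / (648 * k ^ 3 * D ^ 4) * n))) := by gcongr
    _ = _ := by ring

theorem small_subsets (U : Finset α) (t : ℕ) :
    (#{K ∈ U.powerset | #K ≤ t} : ℝ) ≤ 8 ^ t * (9 / 8) ^ #U := by
  have h := Finset.sum_pow_mul_eq_add_pow (1 / 8 : ℝ) 1 U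
  simp only [one_pow, mul_one] at h
  have h1 : (#{K ∈ U.powerset | #K ≤ t} : ℝ) * (1 / 8) ^ t ≤ ∑ K ∈ U.powerset, (1 / 8 : ℝ) ^ #K := by
    calc _ ≤ ∑ K ∈ U.powerset with #K ≤ t, (1 / 8 : ℝ) ^ #K := by
          rw [← nsmul_eq_mul]
          apply card_nsmul_le_sum
          intro K hK
          exact pow_le_pow_of_le_one (by norm_num) (by norm_num) (mem_filter.1 hK).2
      _ ≤ _ := sum_le_sum_of_subset_of_nonneg (filter_subset _ _) (fun _ _ _ => by positivity)
  rw [h, div_pow, one_pow, mul_one_div, div_le_iff₀ (by positivity)] at h1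
  norm_num at h1 ⊢
  linarith

theorem numeric (k : ℕ) (hk : 1 ≤ k) :
    32 * (1 / 2 : ℝ) ^ (128 * k) ≤
      Real.exp (-(16 * k)) / (648 * k ^ 3 * ((384 * k : ℕ) : ℝ) ^ 4) := by
  have hkp : (0 : ℝ) < k := by exact_mod_cast hk
  have h1 : Real.exp (16 * k) ≤ 2 ^ (24 * k) := by
    have : Real.exp (16 * k) = (Real.exp 1 ^ 2) ^ (8 * k) := by
      rw [← pow_mul, ← Real.exp_nat_mul]; congr 1; push_cast; ring
    rw [this, show 24 * k = 3 * (8 * k) by ring, pow_mul 2 3]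
    apply pow_le_pow_left₀ (by positivity)
    have := Real.exp_one_lt_d9
    have h0 := Real.exp_pos 1
    nlinarith
  have h2 : (k : ℝ) ^ 7 ≤ 2 ^ (7 * k) := by
    rw [mul_comm, pow_mul]
    apply pow_le_pow_left₀ hkp.le
    exact_mod_cast (Nat.lt_two_pow_self (n := k)).le
  have h3 : (32 * 648 * 384 ^ 4 : ℝ) ≤ 2 ^ (49 * k) := by
    calc _ ≤ (2 : ℝ) ^ 49 := by norm_num
      _ ≤ _ := pow_le_pow_right₀ (by norm_num) (by omega)
  rw [Real.exp_neg, le_div_iff₀ (by positivity), le_inv_comm₀ (by positivity) (Real.exp_pos _)]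
  refine h1.trans ?_
  rw [le_inv_comm₀ (by positivity) (by positivity)]
  rw [div_pow, one_pow, ← one_div, le_div_iff₀ (by positivity)]
  have h4 : (2 : ℝ) ^ (128 * k) = 2 ^ (49 * k) * 2 ^ (7 * k) * 2 ^ (24 * k) * 2 ^ (48 * k) := by
    rw [← pow_add, ← pow_add, ← pow_add]; congr 1; ring
  have h5 : (1 : ℝ) ≤ 2 ^ (48 * k) := one_le_pow₀ (by norm_num)
  have h6 : (32 * 648 * 384 ^ 4 : ℝ) * k ^ 7 * 2 ^ (24 * k) ≤ 2 ^ (128 * k) := by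
    rw [h4]
    calc _ ≤ (2 : ℝ) ^ (49 * k) * 2 ^ (7 * k) * 2 ^ (24 * k) := by gcongr
      _ ≤ _ := le_mul_of_one_le_right (by positivity) h5
  push_cast
  rw [mul_one_div, div_mul_eq_mul_div, div_mul_eq_mul_div, div_le_one (by positivity)]
  calc _ = (32 * 648 * 384 ^ 4 : ℝ) * k ^ 7 * 2 ^ (24 * k) := by ring
    _ ≤ _ := h6

theorem branch_bound (A : β → Finset α) (Y : Finset β) (X U : Finset α) (k D n t : ℕ) (hk : 1 ≤ k)
    (hD : D = 384 * k) (hX : #X = n) (hY : #Y ≤ 2 * n) (hUX : U ⊆ X) (hU : D * t ≤ #U)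
    (him : ∀ J ∈ Irr A Y X, k * #J + n ≤ k * n) (F : Finset (Finset α))
    (hF : F ⊆ Irr A Y X) (hF1 : ∀ J ∈ F, #(J ∩ U) ≤ t)
    (hF2 : ∀ J ∈ F, ∀ y ∈ Y, #(A y ∩ J) = 1 → #(A y ∩ (X \ U)) ≤ D) :
    (#F : ℝ) ≤ (8 * (1 / 2) ^ (128 * k)) ^ t * (2 ^ n *
      Real.exp (-(Real.exp (-(16 * k)) / (648 * k ^ 3 * D ^ 4) * n))) := by
  have hkp : (0 : ℝ) < k := by exact_mod_cast hk
  have hD1 : 1 ≤ D := by omega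
  have hDp : (1 : ℝ) ≤ D := by exact_mod_cast hD1
  set c : ℝ := Real.exp (-(16 * k)) / (648 * k ^ 3 * D ^ 4) with hc
  let Y' := Y.filter (fun y => #(A y ∩ (X \ U)) ≤ D)
  have hsplit : #F ≤ #{K ∈ U.powerset | #K ≤ t} * #(Irr A Y' (X \ U)) := by
    apply card_split _ _ _ U
    · intro J hJ
      simp [hF1 J hJ]
    · intro J hJ
      have hJ' := mem_Irr.1 (hF hJ)
      rw [mem_Irr]
      refine ⟨sdiff_subset_sdiff hJ'.1 (le_refl _), fun x hx => ?_⟩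
      obtain ⟨y, hy, h⟩ := hJ'.2 x (mem_sdiff.1 hx).1
      exact ⟨y, mem_filter.2 ⟨hy, hF2 J hJ y hy (by rw [h]; simp)⟩, inter_single h sdiff_subset hx⟩
  have hcard : n = #U + #(X \ U) := by
    rw [card_sdiff_of_subset hUX]; have := card_le_card hUX; omega
  have hirr : (3 / 4 : ℝ) ^ #U * #(Irr A Y' (X \ U)) ≤ 2 ^ #(X \ U) * Real.exp (-(c * n)) := by
    by_cases hsmall : 4 * k * #U ≤ n
    · have hb := bounded_degree A Y' (X \ U) k D n hk hD1 (fun y hy => (mem_filter.1 hy).2)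
        ((card_le_card (filter_subset _ _)).trans hY) (by nlinarith)
        (by
          intro J hJ
          apply him
          rw [mem_Irr] at *
          refine ⟨hJ.1.trans sdiff_subset, fun x hx => ?_⟩
          obtain ⟨y, hy, h⟩ := hJ.2 x hx
          exact ⟨y, (mem_filter.1 hy).1, h⟩)
      refine le_trans ?_ hb
      apply mul_le_of_le_one_left (by positivity)
      exact pow_le_one₀ (by norm_num) (by norm_num)
    · have h1 : (#(Irr A Y' (X \ U)) : ℝ) ≤ 2 ^ #(X \ U) := by
        have : #(Irr A Y' (X \ U)) ≤ #((X \ U).powerset) :=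
          card_le_card (fun J hJ => mem_powerset.2 (mem_Irr.1 hJ).1)
        rw [card_powerset] at this
        exact_mod_cast this
      have h2 : (3 / 4 : ℝ) ^ #U ≤ Real.exp (-(c * n)) := by
        calc (3 / 4 : ℝ) ^ #U ≤ (Real.exp (-(1 / 4))) ^ #U := by
              apply pow_le_pow_left₀ (by norm_num)
              have := Real.add_one_le_exp (-(1 / 4) : ℝ); linarith
          _ = Real.exp (-(#U / 4)) := by rw [← Real.exp_nat_mul]; congr 1; ring
          _ ≤ _ := by
              apply Real.exp_le_exp.2
              have h3 : (n : ℝ) ≤ 4 * k * #U := by exact_mod_cast (not_le.1 hsmall).le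
              have h4 : c ≤ 1 / (16 * k) := by
                rw [hc]
                apply div_le_div₀ (by norm_num) (Real.exp_le_one_iff.2 (by linarith)) (by positivity)
                have hk1 : (1 : ℝ) ≤ k := by exact_mod_cast hk
                have e1 : (1 : ℝ) ≤ D ^ 4 := one_le_pow₀ hDp
                have e2 : (k : ℝ) ≤ k ^ 3 := le_self_pow₀ hk1 (by norm_num)
                calc 16 * (k : ℝ) ≤ 648 * k ^ 3 * 1 := by nlinarith
                  _ ≤ _ := by gcongr
              have h5 : c * n ≤ 1 / (16 * k) * (4 * k * #U) := by gcongr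
              have h6 : 1 / (16 * (k : ℝ)) * (4 * k * #U) = #U / 4 := by field_simp; ring
              linarith
      calc _ ≤ Real.exp (-(c * n)) * 2 ^ #(X \ U) := by gcongr
        _ = _ := by ring
  have hsub := small_subsets U t
  have hsplit' : (#F : ℝ) ≤ #{K ∈ U.powerset | #K ≤ t} * #(Irr A Y' (X \ U)) := by exact_mod_cast hsplit
  have hq : (3 / 4 : ℝ) ^ #U ≤ ((1 / 2) ^ (128 * k)) ^ t := by
    calc (3 / 4 : ℝ) ^ #U ≤ (3 / 4 : ℝ) ^ (D * t) := pow_le_pow_of_le_one (by norm_num) (by norm_num) hU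
      _ = (((3 / 4 : ℝ) ^ 3) ^ (128 * k)) ^ t := by rw [← pow_mul, ← pow_mul, hD]; congr 1; ring
      _ ≤ _ := by gcongr; norm_num
  calc (#F : ℝ) ≤ (8 ^ t * (9 / 8) ^ #U) * #(Irr A Y' (X \ U)) := hsplit'.trans (by gcongr)
    _ = (8 ^ t * (3 / 2) ^ #U) * ((3 / 4 : ℝ) ^ #U * #(Irr A Y' (X \ U))) := by
        rw [show (9 / 8 : ℝ) = 3 / 2 * (3 / 4) by norm_num, mul_pow]; ring
    _ ≤ (8 ^ t * (3 / 2) ^ #U) * (2 ^ #(X \ U) * Real.exp (-(c * n))) := by gcongr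
    _ = 8 ^ t * (3 / 4) ^ #U * (2 ^ n * Real.exp (-(c * n))) := by
        have e : (2 : ℝ) ^ n = 2 ^ #U * 2 ^ #(X \ U) := by rw [← pow_add, ← hcard]
        rw [e, show (3 / 2 : ℝ) = 3 / 4 * 2 by norm_num, mul_pow]; ring
    _ ≤ 8 ^ t * ((1 / 2) ^ (128 * k)) ^ t * (2 ^ n * Real.exp (-(c * n))) := by gcongr
    _ = _ := by rw [mul_pow]

theorem main_count (A : β → Finset α) (Y : Finset β) (X : Finset α) (k n : ℕ) (hk : 1 ≤ k)
    (hX : #X = n) (hY : #Y ≤ 2 * n) (him : ∀ J ∈ Irr A Y X, k * #J + n ≤ k * n) :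
    (#(Irr A Y X) : ℝ) ≤ 2 ^ n * Real.exp (-(16 * (1 / 2 : ℝ) ^ (128 * k) * n)) := by
  classical
  obtain ⟨D, hD⟩ : ∃ D, D = 384 * k := ⟨_, rfl⟩
  let U : Finset β → Finset α := fun T => T.biUnion A ∩ X
  let F : Finset β → Finset (Finset α) := fun T => (Irr A Y X).filter (fun J =>
    D * #T ≤ #(U T) ∧ #(J ∩ U T) ≤ #T ∧ ∀ y ∈ Y, #(A y ∩ J) = 1 → #(A y ∩ (X \ U T)) ≤ D)
  have hcover : Irr A Y X ⊆ Y.powerset.biUnion F := by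
    intro J hJ
    have hJX := (mem_Irr.1 hJ).1
    let P := (Y.filter (fun y => #(A y ∩ J) = 1)).powerset.filter (fun T => D * #T ≤ #(U T))
    obtain ⟨T, hT, hmax⟩ := exists_max_image P card ⟨∅, by simp [P]⟩
    simp only [P, mem_filter, mem_powerset] at hT hmax
    rw [mem_biUnion]
    refine ⟨T, mem_powerset.2 (hT.1.trans (filter_subset _ _)), ?_⟩
    refine mem_filter.2 ⟨hJ, hT.2, ?_, ?_⟩
    · have : J ∩ U T ⊆ T.biUnion (fun y => A y ∩ J) := by
        intro z hz
        simp only [U, mem_inter, mem_biUnion] at hz ⊢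
        obtain ⟨hzJ, ⟨y, hy, hzy⟩, _⟩ := hz
        exact ⟨y, hy, hzy, hzJ⟩
      refine (card_le_card this).trans ?_
      have := card_biUnion_le_card_mul T (fun y => A y ∩ J) 1
        (fun y hy => (mem_filter.1 (hT.1 hy)).2.le)
      simpa using this
    · intro y hy hy1
      by_contra hlt
      push Not at hlt
      have hyT : y ∉ T := by
        intro hyT
        have : A y ∩ (X \ U T) = ∅ := by
          ext z
          simp only [U, mem_inter, mem_sdiff, mem_biUnion, notMem_empty, iff_false]
          rintro ⟨h1, h2, h3⟩
          exact h3 ⟨⟨y, hyT, h1⟩, h2⟩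
        rw [this] at hlt
        simp at hlt
      have hun : U (insert y T) = U T ∪ (A y ∩ (X \ U T)) := by
        ext z
        simp only [U, mem_inter, mem_sdiff, mem_biUnion, mem_union, mem_insert, exists_eq_or_imp]
        generalize (∃ a ∈ T, z ∈ A a) = Q
        by_cases hQ : Q <;> by_cases hzX : z ∈ X <;> simp [hQ, hzX]
      have hdisj : Disjoint (U T) (A y ∩ (X \ U T)) := by
        rw [disjoint_left]; intro z hz hz'
        exact (mem_sdiff.1 (mem_inter.1 hz').2).2 hz
      have := hmax (insert y T) ⟨insert_subset (mem_filter.2 ⟨hy, hy1⟩) hT.1, by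
        rw [hun, card_union_of_disjoint hdisj, card_insert_of_notMem hyT, mul_add, mul_one]
        have := hT.2
        omega⟩
      rw [card_insert_of_notMem hyT] at this
      omega
  set c : ℝ := Real.exp (-(16 * k)) / (648 * k ^ 3 * D ^ 4) with hc
  set q : ℝ := 8 * (1 / 2) ^ (128 * k) with hq
  have hF : ∀ T ∈ Y.powerset, (#(F T) : ℝ) ≤ q ^ #T * (2 ^ n * Real.exp (-(c * n))) := by
    intro T _
    by_cases hU : D * #T ≤ #(U T)
    · exact branch_bound A Y X (U T) k D n #T hk hD hX hY inter_subset_right hU him (F T)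
        (filter_subset _ _) (fun J hJ => (mem_filter.1 hJ).2.2.1) (fun J hJ => (mem_filter.1 hJ).2.2.2)
    · have : F T = ∅ := by
        apply filter_eq_empty_iff.2
        intro J _ h; exact hU h.1
      rw [this, card_empty, Nat.cast_zero]; positivity
  have hsum : ∑ T ∈ Y.powerset, q ^ #T = (q + 1) ^ #Y := by
    have h := Finset.sum_pow_mul_eq_add_pow q 1 Y
    simpa using h
  have hq0 : 0 ≤ q := by positivity
  have hqe : (q + 1) ^ #Y ≤ Real.exp (2 * q * n) := by
    calc (q + 1) ^ #Y ≤ (q + 1) ^ (2 * n) := pow_le_pow_right₀ (by linarith) hY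
      _ ≤ (Real.exp q) ^ (2 * n) := pow_le_pow_left₀ (by positivity) (Real.add_one_le_exp q) _
      _ = _ := by rw [← Real.exp_nat_mul]; congr 1; push_cast; ring
  have hnum := numeric k hk
  rw [← hD] at hnum
  calc (#(Irr A Y X) : ℝ) ≤ ∑ T ∈ Y.powerset, (#(F T) : ℝ) := by
        exact_mod_cast (card_le_card hcover).trans card_biUnion_le
    _ ≤ ∑ T ∈ Y.powerset, q ^ #T * (2 ^ n * Real.exp (-(c * n))) := sum_le_sum hF
    _ = (q + 1) ^ #Y * (2 ^ n * Real.exp (-(c * n))) := by rw [← sum_mul, hsum]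
    _ ≤ Real.exp (2 * q * n) * (2 ^ n * Real.exp (-(c * n))) := by gcongr
    _ = 2 ^ n * Real.exp (2 * q * n - c * n) := by rw [sub_eq_add_neg, Real.exp_add]; ring
    _ ≤ _ := by
      gcongr
      have : 4 * q ≤ c := by rw [hq]; linarith
      have hn : (0 : ℝ) ≤ n := by positivity
      nlinarith

end aux

section bridge
open Finset

theorem max_mem_iff {V : Type*} {G : SimpleGraph V} {S : Set V} (h : IsMaxIndepSet G S) (v : V) :
    v ∈ S ↔ ∀ u ∈ S, ¬ G.Adj v u := by
  constructor
  · intro hv u hu; exact h.1 hv hu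
  · intro hv
    have := h.2 (insert v S) (by
      intro a ha b hb hab
      rcases ha with rfl | ha <;> rcases hb with rfl | hb
      · exact G.loopless.irrefl _ hab
      · exact hv b hb hab
      · exact hv a ha hab.symm
      · exact h.1 ha hb hab) (Set.subset_insert _ _)
    rw [this]; exact Set.mem_insert _ _

theorem mis_le_Irr {V : Type} [Fintype V] [DecidableEq V] (G : SimpleGraph V) (X Y : Finset V)
    (A : V → Finset V) (hA : ∀ y x, x ∈ A y ↔ G.Adj y x)
    (hdisj : Disjoint X Y) (hcov : ∀ v : V, v ∈ X ∨ v ∈ Y)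
    (hbip : ∀ a b : V, G.Adj a b → (a ∈ X ∧ b ∈ Y) ∨ (a ∈ Y ∧ b ∈ X)) :
    mis G ≤ #(Irr A Y X) := by
  classical
  have hd := disjoint_left.1 hdisj
  have hex : ∀ S : {S : Set V // IsMaxIndepSet G S}, ∃ J : Finset V, J ∈ Irr A Y X ∧
      ∀ y, (∃ x ∈ J, G.Adj y x) ↔ ∃ x ∈ S.1, x ∈ X ∧ G.Adj y x := by
    rintro ⟨S, hS⟩
    let P := X.powerset.filter (fun J => ∀ y, (∃ x ∈ J, G.Adj y x) ↔ ∃ x ∈ S, x ∈ X ∧ G.Adj y x)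
    obtain ⟨J, hJ, hmin⟩ := exists_min_image P card ⟨X.filter (fun x => x ∈ S), by
      simp only [P, mem_filter, mem_powerset]
      refine ⟨filter_subset _ _, fun y => ?_⟩
      constructor
      · rintro ⟨x, ⟨h1, h2⟩, h3⟩; exact ⟨x, h2, h1, h3⟩
      · rintro ⟨x, h2, h1, h3⟩; exact ⟨x, ⟨h1, h2⟩, h3⟩⟩
    simp only [P, mem_filter, mem_powerset] at hJ hmin
    refine ⟨J, mem_Irr.2 ⟨hJ.1, fun x hx => ?_⟩, hJ.2⟩
    by_contra hcon
    push Not at hcon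
    have hlt := card_erase_lt_of_mem hx
    have := hmin (J.erase x) ⟨(erase_subset _ _).trans hJ.1, fun y => by
      rw [← hJ.2 y]
      constructor
      · rintro ⟨z, hz, h⟩; exact ⟨z, mem_of_mem_erase hz, h⟩
      · rintro ⟨z, hz, h⟩
        by_cases hzx : z = x
        · subst hzx
          have hyY : y ∈ Y := by
            rcases hbip y z h with h' | h'
            · exact absurd h'.2 (hd (hJ.1 hz))
            · exact h'.1
          have hne := hcon y hyY
          by_contra hno
          push Not at hno
          apply hne
          ext u
          simp only [mem_inter, mem_singleton, hA]
          constructor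
          · rintro ⟨h1, h2⟩
            by_contra hu
            exact hno u (mem_erase.2 ⟨hu, h2⟩) h1
          · rintro rfl; exact ⟨h, hz⟩
        · exact ⟨z, mem_erase.2 ⟨hzx, hz⟩, h⟩⟩
    omega
  choose f hf hf2 using hex
  have hinj : Function.Injective (fun S => (⟨f S, hf S⟩ : {J // J ∈ Irr A Y X})) := by
    rintro ⟨S, hS⟩ ⟨S', hS'⟩ h
    have hff : f ⟨S, hS⟩ = f ⟨S', hS'⟩ := congrArg Subtype.val h
    have key : ∀ y, (∃ x ∈ S, x ∈ X ∧ G.Adj y x) ↔ ∃ x ∈ S', x ∈ X ∧ G.Adj y x := by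
      intro y
      rw [← hf2 ⟨S, hS⟩ y, ← hf2 ⟨S', hS'⟩ y, hff]
    have hYeq : ∀ y ∈ Y, (y ∈ S ↔ y ∈ S') := by
      intro y hy
      have hx : ∀ u, G.Adj y u → u ∈ X := by
        intro u hu
        rcases hbip y u hu with h' | h'
        · exact absurd hy (hd h'.1)
        · exact h'.2
      have e : ∀ T : Set V, (∀ u ∈ T, ¬ G.Adj y u) ↔ ¬ ∃ x ∈ T, x ∈ X ∧ G.Adj y x := by
        intro T
        push Not
        constructor
        · intro h u hu _; exact h u hu
        · intro h u hu hyu; exact h u hu (hx u hyu) hyu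
      rw [max_mem_iff hS, max_mem_iff hS', e, e, key]
    have hXeq : ∀ x ∈ X, (x ∈ S ↔ x ∈ S') := by
      intro x hx
      have hy : ∀ u, G.Adj x u → u ∈ Y := by
        intro u hu
        rcases hbip x u hu with h' | h'
        · exact h'.2
        · exact absurd h'.1 (hd hx)
      rw [max_mem_iff hS, max_mem_iff hS']
      constructor
      · intro h u hu hxu
        exact h u ((hYeq u (hy u hxu)).2 hu) hxu
      · intro h u hu hxu
        exact h u ((hYeq u (hy u hxu)).1 hu) hxu
    apply Subtype.ext
    ext v
    rcases hcov v with hv | hv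
    · exact hXeq v hv
    · exact hYeq v hv
  have := Nat.card_le_card_of_injective _ hinj
  rw [Nat.card_eq_fintype_card (α := {J // J ∈ Irr A Y X}), Fintype.card_coe] at this
  exact this

theorem Irr_le_im {V : Type} [Fintype V] [DecidableEq V] (G : SimpleGraph V) (X Y : Finset V)
    (A : V → Finset V) (hA : ∀ y x, x ∈ A y ↔ G.Adj y x)
    (hdisj : Disjoint X Y)
    (hbip : ∀ a b : V, G.Adj a b → (a ∈ X ∧ b ∈ Y) ∨ (a ∈ Y ∧ b ∈ X))
    (J : Finset V) (hJ : J ∈ Irr A Y X) : #J ≤ im G := by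
  classical
  have hd := disjoint_left.1 hdisj
  rw [mem_Irr] at hJ
  obtain ⟨hJX, hJ⟩ := hJ
  have hJ' : ∀ x : V, ∃ y, x ∈ J → y ∈ Y ∧ A y ∩ J = {x} := by
    intro x
    by_cases hx : x ∈ J
    · obtain ⟨y, hy, h⟩ := hJ x hx; exact ⟨y, fun _ => ⟨hy, h⟩⟩
    · exact ⟨x, fun h => absurd h hx⟩
  choose f hf using hJ'
  have hadj : ∀ x ∈ J, ∀ z ∈ J, G.Adj (f x) z ↔ z = x := by
    intro x hx z hz
    have : z ∈ A (f x) ∩ J ↔ z ∈ ({x} : Finset V) := by rw [(hf x hx).2]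
    simpa [hz, hA] using this
  have hinj : Set.InjOn f J := by
    intro x hx z hz h
    have := (hadj z hz x hx).1 (h ▸ (hadj x hx x hx).2 rfl)
    exact this
  unfold im
  apply le_csSup
  · refine ⟨Fintype.card V, ?_⟩
    rintro k ⟨S, hS, _⟩
    have := card_le_univ S
    omega
  · refine ⟨J ∪ J.image f, ?_, ?_⟩
    · rw [card_union_of_disjoint, card_image_of_injOn hinj]
      · omega
      · rw [disjoint_left]
        intro z hz hz'
        obtain ⟨x, hx, rfl⟩ := mem_image.1 hz'
        exact hd (hJX hz) (hf x hx).1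
    · intro v hv
      rcases mem_union.1 hv with hv | hv
      · refine ⟨f v, mem_union_right _ (mem_image_of_mem _ hv), ((hadj v hv v hv).2 rfl).symm, ?_⟩
        intro z hz hvz
        rcases mem_union.1 hz with hz | hz
        · rcases hbip v z hvz with h' | h'
          · exact absurd h'.2 (hd (hJX hz))
          · exact absurd h'.1 (hd (hJX hv))
        · obtain ⟨x, hx, rfl⟩ := mem_image.1 hz
          rw [(hadj x hx v hv).1 hvz.symm]
      · obtain ⟨x, hx, rfl⟩ := mem_image.1 hv
        refine ⟨x, mem_union_left _ hx, (hadj x hx x hx).2 rfl, ?_⟩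
        intro z hz hvz
        rcases mem_union.1 hz with hz | hz
        · exact (hadj x hx z hz).1 hvz
        · obtain ⟨w, hw, rfl⟩ := mem_image.1 hz
          rcases hbip _ _ hvz with h' | h'
          · exact absurd (hf x hx).1 (hd h'.1)
          · exact absurd (hf w hw).1 (hd h'.2)

end bridge

theorem stability_unbalanced_mis :
    ∃ C : ℝ, 0 < C ∧ ∀ ε : ℝ, 0 < ε → ∃ δ : ℝ, 0 < δ ∧ (2 : ℝ) ^ (-(C / ε)) ≤ δ ∧
      ∀ (V : Type) [Fintype V] (G : SimpleGraph V) (X Y : Finset V) (n : ℕ),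
        Disjoint X Y → (∀ v : V, v ∈ X ∨ v ∈ Y) →
        (∀ a b : V, G.Adj a b → (a ∈ X ∧ b ∈ Y) ∨ (a ∈ Y ∧ b ∈ X)) →
        X.card = n → Y.card = 2 * n →
        (im G : ℝ) < (1 - ε) * (n : ℝ) →
        Real.logb 2 (mis G) < (1 - δ) * (n : ℝ) := by
  refine ⟨256, by norm_num, fun ε hε => ?_⟩
  by_cases hε1 : 1 ≤ ε
  · refine ⟨1, one_pos, ?_, ?_⟩
    · apply Real.rpow_le_one_of_one_le_of_nonpos (by norm_num)
      have : 0 < 256 / ε := by positivity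
      linarith
    · intro V _ G X Y n _ _ _ _ _ him
      exfalso
      have h1 : (0 : ℝ) ≤ im G := by positivity
      have h2 : (0 : ℝ) ≤ n := by positivity
      nlinarith
  push Not at hε1
  obtain ⟨k, hk⟩ : ∃ k : ℕ, k = ⌈1 / ε⌉₊ := ⟨_, rfl⟩
  have hk1 : 1 / ε ≤ k := hk ▸ Nat.le_ceil _
  have hk2 : (k : ℝ) < 1 / ε + 1 := hk ▸ Nat.ceil_lt_add_one (by positivity)
  have h1ε : 1 < 1 / ε := by rw [lt_div_iff₀ hε]; linarith
  have hkr : (1 : ℝ) < k := by linarith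
  have hkn : 1 ≤ k := by exact_mod_cast hkr.le
  refine ⟨(1 / 2) ^ (128 * k), by positivity, ?_, ?_⟩
  · have : ((1 : ℝ) / 2) ^ (128 * k) = (2 : ℝ) ^ (-((128 * k : ℕ) : ℝ)) := by
      rw [Real.rpow_neg (by norm_num), Real.rpow_natCast, one_div, inv_pow]
    rw [this]
    apply Real.rpow_le_rpow_of_exponent_le (by norm_num)
    have : 256 / ε = 256 * (1 / ε) := by ring
    rw [this]
    push_cast
    linarith
  · intro V _ G X Y n hdisj hcov hbip hX hY him
    classical
    let A : V → Finset V := fun y => Finset.univ.filter (fun x => G.Adj y x)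
    have hA : ∀ y x, x ∈ A y ↔ G.Adj y x := by intro y x; simp [A]
    have hn : 0 < n := by
      rcases Nat.eq_zero_or_pos n with h | h
      · subst h
        have h1 : (0 : ℝ) ≤ im G := by positivity
        simp at him
        linarith
      · exact h
    have hnr : (0 : ℝ) < n := by exact_mod_cast hn
    have him' : ∀ J ∈ Irr A Y X, k * J.card + n ≤ k * n := by
      intro J hJ
      have h1 : (J.card : ℝ) ≤ im G := by
        exact_mod_cast Irr_le_im G X Y A hA hdisj hbip J hJ
      have h2 : 1 ≤ k * ε := by rwa [div_le_iff₀ hε] at hk1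
      have h3 : (k : ℝ) * J.card + n ≤ k * n := by
        have h4 : (k : ℝ) * J.card ≤ k * ((1 - ε) * n) := by
          apply mul_le_mul_of_nonneg_left _ (by linarith)
          linarith
        nlinarith
      exact_mod_cast h3
    have hmain := main_count A Y X k n hkn hX hY.le him'
    have hmis : (mis G : ℝ) ≤ 2 ^ n * Real.exp (-(16 * (1 / 2 : ℝ) ^ (128 * k) * n)) :=
      le_trans (by exact_mod_cast mis_le_Irr G X Y A hA hdisj hcov hbip) hmain
    set δ : ℝ := (1 / 2 : ℝ) ^ (128 * k) with hδ
    have hδ0 : 0 < δ := by positivity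
    have hδ1 : δ < 1 := by
      apply pow_lt_one₀ (by norm_num) (by norm_num) (by omega)
    have hlog2 : 0 < Real.log 2 := Real.log_pos (by norm_num)
    have hlog2' := Real.log_two_lt_d9
    rcases Nat.eq_zero_or_pos (mis G) with h0 | hpos
    · rw [h0]; simp only [Nat.cast_zero, Real.logb_zero]
      exact mul_pos (by linarith) hnr
    · have hposr : (0 : ℝ) < mis G := by exact_mod_cast hpos
      have hl := Real.log_le_log hposr hmis
      rw [Real.log_mul (by positivity) (Real.exp_pos _).ne', Real.log_exp, Real.log_pow] at hl
      rw [Real.logb, div_lt_iff₀ hlog2]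
      have : 0 < δ * n := by positivity
      nlinarith
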